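/- arXiv:1904.03088 — 2 statements merged into one kernel-verified Lean document; each statement's English description precedes it below -/
import Mathlib

section
/- Let Ω ⊆ ℂ be open, let X be a complex Banach space, and let f ∈ L¹_loc(Ω, X). Suppose f satisfies the Cauchy–Riemann equations very weakly distributionally: there exists a separating set W ⊆ X' such that for every x' ∈ W, the functions u := Re⟨f, x'⟩ and v := Im⟨f, x'⟩ satisfy D₁u = D₂v and D₂u = −D₁v in the sense of distributions on Ω. Then f has a holomorphic representative: there exists a holomorphic function f* : Ω → X with f = f* almost everywhere on Ω. -/
open MeasureTheory

open ContinuousLinearMap Filter Function Metric Set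
open scoped Convolution Topology

/-!
This is the argument of Weyl's lemma. Testing against a separating set of functionals shows that `f`
solves `∂₂f = i ∂₁f` in the sense of `X`-valued distributions. Locally, let `ρ` be a smooth radial
kernel of integral one and `φ` a mollifier with small support. Both `ρ ⋆ f` and `φ ⋆ f` are
holomorphic, and the mean value property for radial kernels gives
`φ ⋆ (ρ ⋆ f) = ρ ⋆ (φ ⋆ f) = φ ⋆ f`. Letting `φ` shrink to the origin yields `ρ ⋆ f = f` almost
everywhere. Two local representatives are continuous, hence agree where both are defined, so they
glue.
-/

section Gluing

variable {α β ι : Type*} [TopologicalSpace α] [MeasurableSpace α] {μ : Measure α}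
  [μ.IsOpenPosMeasure] [TopologicalSpace β] [T2Space β] {f : α → β}

theorem eqOn_inter_of_ae_eq_of_ae_eq {U V : Set α} {g h : α → β} (hU : IsOpen U) (hV : IsOpen V)
    (hg : ContinuousOn g U) (hh : ContinuousOn h V) (hfg : f =ᵐ[μ.restrict U] g)
    (hfh : f =ᵐ[μ.restrict V] h) : EqOn g h (U ∩ V) := by
  have hfg' : f =ᵐ[μ.restrict (U ∩ V)] g :=
    ae_restrict_of_ae_restrict_of_subset inter_subset_left hfg
  have hfh' : f =ᵐ[μ.restrict (U ∩ V)] h :=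
    ae_restrict_of_ae_restrict_of_subset inter_subset_right hfh
  exact Measure.eqOn_open_of_ae_eq (hfg'.symm.trans hfh') (hU.inter hV)
    (hg.mono inter_subset_left) (hh.mono inter_subset_right)

theorem exists_eqOn_and_ae_eq_iUnion_of_ae_eq [HereditarilyLindelofSpace α]
    [OpensMeasurableSpace α] {U : ι → Set α} {g : ι → α → β} (hU : ∀ i, IsOpen (U i))
    (hg : ∀ i, ContinuousOn (g i) (U i)) (hfg : ∀ i, f =ᵐ[μ.restrict (U i)] g i) :
    ∃ F : α → β, (∀ i, EqOn F (g i) (U i)) ∧ f =ᵐ[μ.restrict (⋃ i, U i)] F := by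
  classical
  let F : α → β := fun x ↦ if h : ∃ i, x ∈ U i then g h.choose x else f x
  have hF : ∀ i, EqOn F (g i) (U i) := fun i x hx ↦ by
    have h : ∃ i, x ∈ U i := ⟨i, hx⟩
    simpa only [F, dif_pos h] using
      eqOn_inter_of_ae_eq_of_ae_eq (hU _) (hU i) (hg _) (hg i) (hfg _) (hfg i) ⟨h.choose_spec, hx⟩
  obtain ⟨t, ht, htU⟩ := eq_open_union_countable U hU
  refine ⟨F, hF, ?_⟩
  rw [← htU, ae_eq_restrict_biUnion_iff U ht]
  intro i _
  filter_upwards [hfg i, self_mem_ae_restrict (hU i).measurableSet] with x hx hxU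
  rw [hx, hF i hxU]

end Gluing

section Convolution

variable {G F : Type*} [NormedAddCommGroup G] [MeasurableSpace G] [BorelSpace G] {μ : Measure G}
  [NormedAddCommGroup F] [NormedSpace ℝ F] {f g : G → F}

theorem convolution_lsmul_left_comm [ProperSpace G] [μ.IsAddHaarMeasure]
    [CompleteSpace F] {a b : G → ℝ} (ha : Continuous a) (hac : HasCompactSupport a)
    (hb : Continuous b) (hbc : HasCompactSupport b) (hg : LocallyIntegrable g μ) :
    a ⋆[lsmul ℝ ℝ, μ] (b ⋆[lsmul ℝ ℝ, μ] g) = b ⋆[lsmul ℝ ℝ, μ] (a ⋆[lsmul ℝ ℝ, μ] g) := by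
  have assoc {a b : G → ℝ} (ha : Continuous a) (hac : HasCompactSupport a) (hb : Continuous b)
      (hbc : HasCompactSupport b) : (a ⋆[lsmul ℝ ℝ, μ] b) ⋆[lsmul ℝ ℝ, μ] g =
        a ⋆[lsmul ℝ ℝ, μ] (b ⋆[lsmul ℝ ℝ, μ] g) := by
    have hgn : LocallyIntegrable (‖g ·‖) μ := fun x ↦ (hg x).norm
    have hbg : Continuous ((‖b ·‖) ⋆[mul ℝ ℝ, μ] (‖g ·‖)) :=
      hbc.norm.continuous_convolution_left _ hb.norm hgn
    ext x
    exact convolution_assoc _ _ _ _ (fun x y z ↦ by simp [smul_smul, mul_comm])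
      ha.aestronglyMeasurable hb.aestronglyMeasurable hg.aestronglyMeasurable
      (.of_forall (hac.convolutionExists_left _ ha hb.locallyIntegrable))
      (.of_forall (hbc.norm.convolutionExists_left _ hb.norm hgn))
      (hac.norm.convolutionExists_left _ ha.norm hbg.locallyIntegrable x)
  have comm : a ⋆[lsmul ℝ ℝ, μ] b = b ⋆[lsmul ℝ ℝ, μ] a := by
    rw [← convolution_flip]
    congr 1
    ext
    simp
  rw [← assoc ha hac hb hbc, comm, assoc hb hbc ha hac]

variable [NormedSpace ℝ G] [FiniteDimensional ℝ G] [μ.IsAddHaarMeasure]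

theorem fderiv_convolution_lsmul_apply {k : G → ℝ} (hk : ContDiff ℝ 1 k)
    (hkc : HasCompactSupport k) (hg : LocallyIntegrable g μ) (x v : G) :
    fderiv ℝ (k ⋆[lsmul ℝ ℝ, μ] g) x v = -∫ y, fderiv ℝ (fun t ↦ k (x - t)) y v • g y ∂μ := by
  have hfderiv (y : G) : fderiv ℝ (fun t ↦ k (x - t)) y = -fderiv ℝ k (x - y) := by
    simpa [comp_def] using ((hk.differentiable one_ne_zero (x - y)).hasFDerivAt.comp y
      ((hasFDerivAt_id y).const_sub x)).fderiv
  have hconv : ConvolutionExistsAt (fderiv ℝ k) g x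
      ((lsmul ℝ ℝ : ℝ →L[ℝ] F →L[ℝ] F).precompL G) μ :=
    (hkc.fderiv ℝ).convolutionExists_left _ (hk.continuous_fderiv one_ne_zero) hg x
  rw [(hkc.hasFDerivAt_convolution_left (lsmul ℝ ℝ) hk hg x).fderiv, convolution_def,
    ContinuousLinearMap.integral_apply hconv, ← integral_sub_left_eq_self _ μ x, ← integral_neg]
  simp [hfderiv, precompL_apply]

theorem ae_eq_of_forall_normed_convolution_eq [HasContDiffBump G] [CompleteSpace F]
    (hf : LocallyIntegrable f μ) (hg : LocallyIntegrable g μ) {s : Set G} {r : ℝ} (hr : 0 < r)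
    (hfg : ∀ φ : ContDiffBump (0 : G), φ.rOut ≤ r →
      EqOn (φ.normed μ ⋆[lsmul ℝ ℝ, μ] f) (φ.normed μ ⋆[lsmul ℝ ℝ, μ] g) s) :
    ∀ᵐ x ∂μ, x ∈ s → f x = g x := by
  let φ (n : ℕ) : ContDiffBump (0 : G) :=
    ⟨r / (n + 1) / 2, r / (n + 1), by positivity, half_lt_self (by positivity)⟩
  have hφr (n : ℕ) : (φ n).rOut ≤ r := div_le_self hr.le (by simp)
  have hφ : Tendsto (fun n ↦ (φ n).rOut) atTop (𝓝 0) := by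
    simpa [φ, div_eq_mul_inv] using (tendsto_one_div_add_atTop_nhds_zero_nat (𝕜 := ℝ)).const_mul r
  have hφ' : ∀ᶠ n in atTop, (φ n).rOut ≤ 2 * (φ n).rIn :=
    .of_forall fun n ↦ (mul_div_cancel₀ (r / (n + 1)) two_ne_zero).ge
  filter_upwards [ContDiffBump.ae_convolution_tendsto_right_of_locallyIntegrable hφ hφ' hf,
    ContDiffBump.ae_convolution_tendsto_right_of_locallyIntegrable hφ hφ' hg] with x hfx hgx hx
  exact tendsto_nhds_unique (hfx.congr fun n ↦ hfg (φ n) (hφr n) hx) hgx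

end Convolution

section RadialKernel

/-- A radial mollifier of radius `r`: a smooth radial kernel supported in the closed ball of radius
`r` around the origin, with integral one. No sign is imposed, since only the mean value property of
such kernels is used. -/
structure IsRadialMollifier {E : Type*} [NormedAddCommGroup E] [NormedSpace ℝ E]
    [MeasurableSpace E] (μ : Measure E) (r : ℝ) (ρ : E → ℝ) : Prop where
  contDiff : ContDiff ℝ (⊤ : ℕ∞) ρ
  tsupport_subset : tsupport ρ ⊆ closedBall 0 r
  eq_of_norm_eq : ∀ ⦃x y : E⦄, ‖x‖ = ‖y‖ → ρ x = ρ y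
  integral_eq_one : ∫ x, ρ x ∂μ = 1

theorem IsRadialMollifier.hasCompactSupport {E : Type*} [NormedAddCommGroup E] [NormedSpace ℝ E]
    [ProperSpace E] [MeasurableSpace E] {μ : Measure E} {r : ℝ} {ρ : E → ℝ}
    (hρ : IsRadialMollifier μ r ρ) : HasCompactSupport ρ :=
  (isCompact_closedBall 0 r).of_isClosed_subset (isClosed_tsupport ρ) hρ.tsupport_subset

theorem exists_isRadialMollifier {E : Type*} [NormedAddCommGroup E] [InnerProductSpace ℝ E]
    [ProperSpace E] [MeasurableSpace E] [BorelSpace E] (μ : Measure E)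
    [IsFiniteMeasureOnCompacts μ] [μ.IsOpenPosMeasure] {r : ℝ} (hr : 0 < r) :
    ∃ ρ : E → ℝ, IsRadialMollifier μ r ρ := by
  let b : ContDiffBump (0 : ℝ) :=
    ⟨r ^ 2 / 2, r ^ 2, by positivity, half_lt_self (by positivity)⟩
  let k : E → ℝ := fun x ↦ b (‖x‖ ^ 2)
  have hk : ContDiff ℝ (⊤ : ℕ∞) k := b.contDiff.comp (contDiff_norm_sq ℝ)
  have hks : tsupport k ⊆ closedBall 0 r := by
    refine closure_minimal (fun x hx ↦ ?_) isClosed_closedBall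
    have hx' : ‖x‖ ^ 2 ∈ ball (0 : ℝ) (r ^ 2) := b.support_eq ▸ hx
    have : ‖x‖ ^ 2 < r ^ 2 := by simpa using hx'
    simpa using (abs_lt_of_sq_lt_sq this hr.le).le
  have hpos : 0 < ∫ x, k x ∂μ := by
    refine hk.continuous.integral_pos_of_hasCompactSupport_nonneg_nonzero (x := 0)
      ((isCompact_closedBall _ _).of_isClosed_subset (isClosed_tsupport _) hks)
      (fun x ↦ b.nonneg) ?_
    have : b 0 = 1 := b.one_of_mem_closedBall (by simp [b.rIn_pos.le])
    simp [k, this]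
  exact ⟨fun x ↦ (∫ y, k y ∂μ)⁻¹ * k x, contDiff_const.mul hk,
    (closure_mono (support_mul_subset_right _ _)).trans hks,
    fun x y hxy ↦ by simp only [k, hxy], by
      rw [integral_const_mul, inv_mul_cancel₀ hpos.ne']⟩

end RadialKernel

section MeanValue

variable {X : Type*} [NormedAddCommGroup X]

theorem integral_circleAverage_mul [NormedSpace ℝ X] [CompleteSpace X] {g : ℂ → X}
    (hg : Integrable g) :
    ∫ w, Real.circleAverage (fun ζ ↦ g (ζ * w)) 0 1 = ∫ w, g w := by
  have hrot (θ : ℝ) : MeasurePreserving (fun w : ℂ ↦ circleMap 0 1 θ * w) := by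
    have : (fun w ↦ circleMap 0 1 θ * w) = rotation (Circle.exp θ) := by
      ext w
      simp [rotation_apply, circleMap]
    exact this ▸ (rotation (Circle.exp θ)).measurePreserving
  have : IsFiniteMeasure (volume.restrict (uIoc 0 (2 * Real.pi))) :=
    inferInstanceAs (IsFiniteMeasure (volume.restrict (Ioc _ _)))
  have hint : Integrable (uncurry fun (θ : ℝ) (w : ℂ) ↦ g (circleMap 0 1 θ * w))
      ((volume.restrict (uIoc 0 (2 * Real.pi))).prod volume) := by
    have hskew : MeasurePreserving (fun p : ℝ × ℂ ↦ (p.1, circleMap 0 1 p.1 * p.2))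
        ((volume.restrict (uIoc 0 (2 * Real.pi))).prod volume)
        ((volume.restrict (uIoc 0 (2 * Real.pi))).prod volume) :=
      (MeasurePreserving.id _).skew_product (by unfold uncurry; fun_prop)
        (.of_forall fun θ ↦ (hrot θ).map_eq)
    exact hskew.integrable_comp_of_integrable (hg.comp_snd _)
  have hcomp (θ : ℝ) : ∫ w, g (circleMap 0 1 θ * w) = ∫ w, g w :=
    (hrot θ).integral_comp (measurableEmbedding_mulLeft₀ (circleMap_ne_center one_ne_zero)) g
  simp only [Real.circleAverage_def]
  rw [integral_smul, ← intervalIntegral_integral_swap hint]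
  simp only [hcomp, intervalIntegral.integral_const, sub_zero]
  rw [inv_smul_smul₀ (by positivity)]

variable [NormedSpace ℂ X] [CompleteSpace X]

theorem circleAverage_sub_mul_of_diffContOnCl {h : ℂ → X} {z w : ℂ} {r : ℝ} (hr : 0 < r)
    (hh : DiffContOnCl ℂ h (ball z r)) (hw : ‖w‖ ≤ r) :
    Real.circleAverage (fun ζ ↦ h (z - ζ * w)) 0 1 = h z := by
  have hmaps : MapsTo (fun ζ ↦ z - ζ * w) (ball 0 1) (ball z r) := fun ζ hζ ↦ by
    have hζ' : ‖ζ‖ < 1 := by simpa using hζ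
    have : ‖ζ‖ * ‖w‖ < r := by nlinarith [norm_nonneg w, norm_nonneg ζ]
    simpa using this
  have hcomp : DiffContOnCl ℂ (fun ζ ↦ h (z - ζ * w)) (ball 0 |1|) := by
    rw [abs_one]
    exact hh.comp (Differentiable.diffContOnCl (by fun_prop)) hmaps
  simpa using hcomp.circleAverage

theorem convolution_radial_eq_integral_smul {ρ : ℂ → ℝ} {h : ℂ → X} {z : ℂ} {r : ℝ} (hr : 0 < r)
    (hρ : Integrable ρ) (hρs : support ρ ⊆ closedBall 0 r) (hρr : ∀ v w, ‖v‖ = ‖w‖ → ρ v = ρ w)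
    (hh : DiffContOnCl ℂ h (ball z r)) :
    (ρ ⋆[lsmul ℝ ℝ, volume] h) z = (∫ w, ρ w) • h z := by
  have hcont : ContinuousOn (fun w ↦ h (z - w)) (closedBall 0 r) := by
    refine hh.continuousOn_ball.comp (by fun_prop) fun w hw ↦ ?_
    simpa using hw
  have hint : Integrable fun w ↦ ρ w • h (z - w) :=
    (integrableOn_iff_integrable_of_support_subset
      ((support_smul_subset_left _ _).trans hρs)).1
      (hρ.integrableOn.smul_continuousOn hcont (isCompact_closedBall _ _))
  have havg (w : ℂ) :
      Real.circleAverage (fun ζ ↦ ρ (ζ * w) • h (z - ζ * w)) 0 1 = ρ w • h z := by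
    have hrad : EqOn (fun ζ ↦ ρ (ζ * w) • h (z - ζ * w)) (fun ζ ↦ ρ w • h (z - ζ * w))
        (sphere 0 |1|) := fun ζ hζ ↦ by
      have : ‖ζ‖ = 1 := by simpa using hζ
      simp only [hρr (ζ * w) w (by simp [this])]
    rw [Real.circleAverage_congr_sphere hrad, Real.circleAverage_fun_smul]
    by_cases hw : ρ w = 0
    · simp [hw]
    · rw [circleAverage_sub_mul_of_diffContOnCl hr hh (by simpa using hρs hw)]
  calc (ρ ⋆[lsmul ℝ ℝ, volume] h) z = ∫ w, ρ w • h (z - w) := rfl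
    _ = ∫ w, Real.circleAverage (fun ζ ↦ ρ (ζ * w) • h (z - ζ * w)) 0 1 :=
      (integral_circleAverage_mul hint).symm
    _ = (∫ w, ρ w) • h z := by simp only [havg, integral_smul_const]

theorem IsRadialMollifier.convolution_eq {ρ : ℂ → ℝ} {h : ℂ → X} {z : ℂ} {r : ℝ}
    (hρ : IsRadialMollifier volume r ρ) (hr : 0 < r) (hh : DiffContOnCl ℂ h (ball z r)) :
    (ρ ⋆[lsmul ℝ ℝ, volume] h) z = h z := by
  rw [convolution_radial_eq_integral_smul hr
    (hρ.contDiff.continuous.integrable_of_hasCompactSupport hρ.hasCompactSupport)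
    ((subset_tsupport ρ).trans hρ.tsupport_subset) hρ.eq_of_norm_eq hh, hρ.integral_eq_one,
    one_smul]

end MeanValue

/-- The Cauchy–Riemann equation `∂₂f = i ∂₁f` on `U` in the sense of vector-valued distributions.
Since the test functions are supported in `U`, the integrals are taken over the whole plane, and
the values of `f` outside `U` do not matter. -/
def IsDistribHolomorphicOn {X : Type*} [NormedAddCommGroup X] [NormedSpace ℂ X] (f : ℂ → X)
    (U : Set ℂ) : Prop :=
  ∀ φ : ℂ → ℝ, ContDiff ℝ (⊤ : ℕ∞) φ → HasCompactSupport φ → tsupport φ ⊆ U →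
    ∫ z, fderiv ℝ φ z Complex.I • f z = Complex.I • ∫ z, fderiv ℝ φ z 1 • f z

theorem integrable_fderiv_apply_smul {E F : Type*} [NormedAddCommGroup E] [NormedSpace ℝ E]
    [MeasurableSpace E] [BorelSpace E] {μ : Measure E} [NormedAddCommGroup F]
    [NormedSpace ℝ F] {f : E → F} {U : Set E} (hf : LocallyIntegrableOn f U μ) {φ : E → ℝ}
    (hφ : ContDiff ℝ 1 φ) (hφc : HasCompactSupport φ) (hφU : tsupport φ ⊆ U) (v : E) :
    Integrable (fun x ↦ fderiv ℝ φ x v • f x) μ := by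
  have hcont : Continuous fun x ↦ fderiv ℝ φ x v :=
    (hφ.continuous_fderiv one_ne_zero).clm_apply continuous_const
  have hsupp : support (fun x ↦ fderiv ℝ φ x v • f x) ⊆ tsupport φ :=
    (support_smul_subset_left _ _).trans
      ((subset_tsupport _).trans (tsupport_fderiv_apply_subset ℝ v))
  exact (integrableOn_iff_integrable_of_support_subset hsupp).1
    ((hf.integrableOn_compact_subset hφU hφc).continuousOn_smul hcont.continuousOn hφc)

namespace IsDistribHolomorphicOn

variable {X : Type*} [NormedAddCommGroup X] [NormedSpace ℂ X] {f g : ℂ → X} {U V : Set ℂ}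

theorem mono (hf : IsDistribHolomorphicOn f U) (hVU : V ⊆ U) : IsDistribHolomorphicOn f V :=
  fun φ hφ hφc hφV ↦ hf φ hφ hφc (hφV.trans hVU)

theorem congr (hf : IsDistribHolomorphicOn f U) (hfg : EqOn f g U) :
    IsDistribHolomorphicOn g U := by
  intro φ hφ hφc hφU
  have hint (v : ℂ) : ∫ z, fderiv ℝ φ z v • g z = ∫ z, fderiv ℝ φ z v • f z := by
    refine integral_congr_ae (.of_forall fun z ↦ ?_)
    by_cases hz : z ∈ tsupport φ
    · simp only [hfg (hφU hz)]
    · simp [fderiv_of_notMem_tsupport ℝ hz]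
  simpa only [hint] using hf φ hφ hφc hφU

theorem of_re_im {f : ℂ → ℂ} (hf : LocallyIntegrableOn f U)
    (h₁ : ∀ φ : ℂ → ℝ, ContDiff ℝ (⊤ : ℕ∞) φ → HasCompactSupport φ → tsupport φ ⊆ U →
      ∫ z in U, (f z).re * fderiv ℝ φ z 1 = ∫ z in U, (f z).im * fderiv ℝ φ z Complex.I)
    (h₂ : ∀ φ : ℂ → ℝ, ContDiff ℝ (⊤ : ℕ∞) φ → HasCompactSupport φ → tsupport φ ⊆ U →
      ∫ z in U, (f z).re * fderiv ℝ φ z Complex.I = -∫ z in U, (f z).im * fderiv ℝ φ z 1) :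
    IsDistribHolomorphicOn f U := by
  intro φ hφ hφc hφU
  have hint (v : ℂ) : Integrable fun z ↦ fderiv ℝ φ z v • f z :=
    integrable_fderiv_apply_smul hf (hφ.of_le (by norm_cast)) hφc hφU v
  have hzero (v z : ℂ) (hz : z ∉ U) : fderiv ℝ φ z v = 0 := by
    simp [fderiv_of_notMem_tsupport ℝ fun h ↦ hz (hφU h)]
  have hre (v : ℂ) : (∫ z, fderiv ℝ φ z v • f z).re = ∫ z in U, (f z).re * fderiv ℝ φ z v := by
    rw [setIntegral_eq_integral_of_forall_compl_eq_zero fun z hz ↦ by simp [hzero v z hz]]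
    simpa [mul_comm] using (integral_re (hint v)).symm
  have him (v : ℂ) : (∫ z, fderiv ℝ φ z v • f z).im = ∫ z in U, (f z).im * fderiv ℝ φ z v := by
    rw [setIntegral_eq_integral_of_forall_compl_eq_zero fun z hz ↦ by simp [hzero v z hz]]
    simpa [mul_comm] using (integral_im (hint v)).symm
  apply Complex.ext
  · rw [smul_eq_mul, Complex.I_mul_re, hre, him, h₂ φ hφ hφc hφU]
  · rw [smul_eq_mul, Complex.I_mul_im, hre, him, h₁ φ hφ hφc hφU]

theorem of_separating [CompleteSpace X] (hf : LocallyIntegrableOn f U)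
    {W : Set (X →L[ℂ] ℂ)} (hW : ∀ x : X, (∀ x' ∈ W, x' x = 0) → x = 0)
    (hfW : ∀ x' ∈ W, IsDistribHolomorphicOn (x' ∘ f) U) : IsDistribHolomorphicOn f U := by
  intro φ hφ hφc hφU
  have hcomm (x' : X →L[ℂ] ℂ) (v : ℂ) :
      x' (∫ z, fderiv ℝ φ z v • f z) = ∫ z, fderiv ℝ φ z v • (x' ∘ f) z := by
    rw [← x'.integral_comp_comm
      (integrable_fderiv_apply_smul hf (hφ.of_le (by norm_cast)) hφc hφU v)]
    simp
  refine sub_eq_zero.1 (hW _ fun x' hx' ↦ ?_)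
  rw [map_sub, map_smul, hcomm, hcomm, hfW x' hx' φ hφ hφc hφU, sub_self]

theorem differentiableAt_convolution (hg : LocallyIntegrable g) (hgU : IsDistribHolomorphicOn g U)
    {k : ℂ → ℝ} (hk : ContDiff ℝ (⊤ : ℕ∞) k) (hkc : HasCompactSupport k) {z : ℂ}
    (hz : ∀ w ∈ tsupport k, z - w ∈ U) :
    DifferentiableAt ℂ (k ⋆[lsmul ℝ ℝ, volume] g) z := by
  have hk' : ContDiff ℝ 1 k := hk.of_le (by norm_cast)
  let e : ℂ ≃ₜ ℂ := Homeomorph.subLeft z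
  have hsupp : tsupport (k ∘ e) ⊆ U := by
    rw [tsupport_comp_eq_preimage]
    intro w hw
    simpa [e] using hz _ hw
  rw [differentiableAt_complex_iff_differentiableAt_real]
  refine ⟨(hkc.hasFDerivAt_convolution_left _ hk' hg z).differentiableAt, ?_⟩
  rw [fderiv_convolution_lsmul_apply hk' hkc hg, fderiv_convolution_lsmul_apply hk' hkc hg,
    smul_neg]
  exact congrArg Neg.neg
    (hgU (k ∘ e) (hk.comp (contDiff_const.sub contDiff_id)) (hkc.comp_homeomorph e) hsupp)

theorem differentiableAt_convolution_of_closedBall_subset (hg : LocallyIntegrable g)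
    (hgU : IsDistribHolomorphicOn g U) {k : ℂ → ℝ} (hk : ContDiff ℝ (⊤ : ℕ∞) k) {r : ℝ}
    (hks : tsupport k ⊆ closedBall 0 r) {z : ℂ} (hz : closedBall z r ⊆ U) :
    DifferentiableAt ℂ (k ⋆[lsmul ℝ ℝ, volume] g) z := by
  refine hgU.differentiableAt_convolution hg hk
    ((isCompact_closedBall 0 r).of_isClosed_subset (isClosed_tsupport k) hks) fun w hw ↦ hz ?_
  simpa using hks hw

variable [CompleteSpace X]

theorem ae_eq_radial_convolution (hg : LocallyIntegrable g) (hgU : IsDistribHolomorphicOn g U)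
    {ρ : ℂ → ℝ} {r : ℝ} (hr : 0 < r) (hρ : IsRadialMollifier volume r ρ) :
    ∀ᵐ z, closedBall z (2 * r) ⊆ U → g z = (ρ ⋆[lsmul ℝ ℝ, volume] g) z := by
  have hρg : Continuous (ρ ⋆[lsmul ℝ ℝ, volume] g) :=
    hρ.hasCompactSupport.continuous_convolution_left _ hρ.contDiff.continuous hg
  refine ae_eq_of_forall_normed_convolution_eq (s := {z | closedBall z (2 * r) ⊆ U}) hg
    hρg.locallyIntegrable hr fun φ hφ z hz ↦ ?_
  have hφs : tsupport (φ.normed volume) ⊆ closedBall 0 r := by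
    rw [φ.tsupport_normed_eq]
    exact closedBall_subset_closedBall hφ
  have hφg : DifferentiableOn ℂ (φ.normed volume ⋆[lsmul ℝ ℝ, volume] g) (closedBall z r) :=
    fun w hw ↦ (hgU.differentiableAt_convolution_of_closedBall_subset hg φ.contDiff_normed hφs
      ((closedBall_subset_closedBall' (by linarith [mem_closedBall.1 hw])).trans
        hz)).differentiableWithinAt
  rw [convolution_lsmul_left_comm φ.continuous_normed φ.hasCompactSupport_normed
    hρ.contDiff.continuous hρ.hasCompactSupport hg]
  exact (hρ.convolution_eq hr (hφg.diffContOnCl_ball subset_rfl)).symm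

theorem exists_local_representative {Ω : Set ℂ} (hΩ : IsOpen Ω) (hf : LocallyIntegrableOn f Ω)
    (hfΩ : IsDistribHolomorphicOn f Ω) {z : ℂ} (hz : z ∈ Ω) :
    ∃ r > 0, ball z r ⊆ Ω ∧ ∃ h : ℂ → X, DifferentiableOn ℂ h (ball z r) ∧
      f =ᵐ[volume.restrict (ball z r)] h := by
  obtain ⟨ε, hε, hεΩ⟩ := nhds_basis_closedBall.mem_iff.1 (hΩ.mem_nhds hz)
  obtain ⟨r, hr, rfl⟩ : ∃ r > 0, 3 * r = ε := ⟨ε / 3, by positivity, by ring⟩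
  let g : ℂ → X := (closedBall z (3 * r)).indicator f
  have hg : LocallyIntegrable g := ((hf.integrableOn_compact_subset hεΩ
    (isCompact_closedBall _ _)).integrable_indicator measurableSet_closedBall).locallyIntegrable
  have hgU : IsDistribHolomorphicOn g (closedBall z (3 * r)) :=
    (hfΩ.mono hεΩ).congr (eqOn_indicator).symm
  obtain ⟨ρ, hρ⟩ := exists_isRadialMollifier (volume : Measure ℂ) hr
  have hball {w : ℂ} (hw : w ∈ ball z r) : closedBall w (2 * r) ⊆ closedBall z (3 * r) :=
    closedBall_subset_closedBall' (by linarith [mem_ball.1 hw])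
  have hsub : ball z r ⊆ closedBall z (3 * r) := fun w hw ↦
    hball hw (mem_closedBall_self (by positivity))
  refine ⟨r, hr, hsub.trans hεΩ, ρ ⋆[lsmul ℝ ℝ, volume] g, fun w hw ↦ ?_, ?_⟩
  · exact (hgU.differentiableAt_convolution_of_closedBall_subset hg hρ.contDiff hρ.tsupport_subset
      ((closedBall_subset_closedBall (by linarith)).trans (hball hw))).differentiableWithinAt
  · rw [EventuallyEq, ae_restrict_iff' measurableSet_ball]
    filter_upwards [hgU.ae_eq_radial_convolution hg hr hρ] with w hgw hw
    rw [← hgw (hball hw)]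
    exact (indicator_of_mem (hsub hw) f).symm

theorem exists_holomorphic_representative {Ω : Set ℂ} (hΩ : IsOpen Ω)
    (hf : LocallyIntegrableOn f Ω) (hfΩ : IsDistribHolomorphicOn f Ω) :
    ∃ F : ℂ → X, DifferentiableOn ℂ F Ω ∧ f =ᵐ[volume.restrict Ω] F := by
  choose r hr hrΩ h hh hfh using fun z : Ω ↦ hfΩ.exists_local_representative hΩ hf z.2
  obtain ⟨F, hF, hfF⟩ := exists_eqOn_and_ae_eq_iUnion_of_ae_eq (fun _ ↦ isOpen_ball)
    (fun z ↦ (hh z).continuousOn) hfh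
  have hcover : ⋃ z : Ω, ball (z : ℂ) (r z) = Ω :=
    (iUnion_subset hrΩ).antisymm fun z hz ↦ mem_iUnion.2 ⟨⟨z, hz⟩, mem_ball_self (hr ⟨z, hz⟩)⟩
  rw [hcover] at hfF
  refine ⟨F, fun z hz ↦ ?_, hfF⟩
  exact (((hh ⟨z, hz⟩).congr (hF ⟨z, hz⟩)).differentiableAt
    (ball_mem_nhds z (hr ⟨z, hz⟩))).differentiableWithinAt

end IsDistribHolomorphicOn

/-- If `f ∈ L¹_loc(Ω, X)` (Ω ⊆ ℂ open, X a complex Banach space)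
satisfies the Cauchy–Riemann equations very weakly distributionally — i.e. there is a
separating set `W ⊆ X'` such that for every `x' ∈ W` the functions `u = Re⟨f, x'⟩`,
`v = Im⟨f, x'⟩` satisfy `D₁u = D₂v`, `D₂u = -D₁v` distributionally — then `f` has a
holomorphic representative. -/
theorem very_weak_distributional_CR_implies_holomorphic_representative
    {X : Type*} [NormedAddCommGroup X] [NormedSpace ℂ X] [CompleteSpace X]
    {Ω : Set ℂ} (hΩ : IsOpen Ω) (f : ℂ → X) (hf : LocallyIntegrableOn f Ω)
    (W : Set (X →L[ℂ] ℂ)) (hW : ∀ x : X, (∀ x' ∈ W, x' x = 0) → x = 0)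
    (hCR₁ : ∀ x' ∈ W, ∀ φ : ℂ → ℝ, ContDiff ℝ (⊤ : ℕ∞) φ → HasCompactSupport φ →
      tsupport φ ⊆ Ω →
      ∫ z in Ω, (x' (f z)).re * fderiv ℝ φ z 1 =
        ∫ z in Ω, (x' (f z)).im * fderiv ℝ φ z Complex.I)
    (hCR₂ : ∀ x' ∈ W, ∀ φ : ℂ → ℝ, ContDiff ℝ (⊤ : ℕ∞) φ → HasCompactSupport φ →
      tsupport φ ⊆ Ω →
      ∫ z in Ω, (x' (f z)).re * fderiv ℝ φ z Complex.I =
        -∫ z in Ω, (x' (f z)).im * fderiv ℝ φ z 1) :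
    ∃ fstar : ℂ → X, (∀ z ∈ Ω, DifferentiableAt ℂ fstar z) ∧
      f =ᵐ[volume.restrict Ω] fstar := by
  have hscalar : ∀ x' ∈ W, IsDistribHolomorphicOn (x' ∘ f) Ω := fun x' hx' ↦
    .of_re_im (x'.locallyIntegrableOn_comp hf) (hCR₁ x' hx') (hCR₂ x' hx')
  obtain ⟨F, hF, hfF⟩ :=
    (IsDistribHolomorphicOn.of_separating hf hW hscalar).exists_holomorphic_representative hΩ hf
  exact ⟨F, fun z hz ↦ hF.differentiableAt (hΩ.mem_nhds hz), hfF⟩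
end

section
/- Let X be a complex Banach space, Ω ⊆ ℂ open, and let (f_i)_{i∈I} be a net (indexed by a directed set I) of holomorphic functions f_i : Ω → X which is locally L¹-bounded, i.e. there exists g ∈ L¹_loc(Ω, ℝ) such that ‖f_i(ξ)‖_X ≤ g(ξ) for almost every ξ ∈ Ω and all i ∈ I. Assume f(z) := lim_{i∈I} f_i(z) exists for every z ∈ Ω. Then f is holomorphic and f_i → f uniformly on every compact subset of Ω. -/
open MeasureTheory Filter

/-!
By the mean value property and integration in polar coordinates, the norm of a holomorphic function
at the centre of a disc is at most the average of its norm over that disc. Local `L¹` bounds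
therefore give local sup bounds, which by the Schwarz lemma make the family equicontinuous. On a
compact set pointwise convergence of an equicontinuous family is uniform, whatever the index set,
and the limit is holomorphic by Weierstrass' theorem.
-/

section LocallyL1Bounded

open Set Topology ENNReal

variable {α ι E : Type*} [TopologicalSpace α] [MeasurableSpace α]

/-- The family `F` is locally bounded in `L¹(μ)` on `s`: near each point of `s`, the `L¹` norms of
its members have a common finite bound. Unlike in the domination hypothesis `‖F i x‖ ≤ g x`, no
single integrable function has to bound the whole family. Neighbourhoods are taken within `s`, as
for `LocallyIntegrableOn`. -/
def LocallyL1BoundedOn [ENorm E] (F : ι → α → E) (s : Set α) (μ : Measure α) : Prop :=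
  ∀ x ∈ s, ∃ U ∈ 𝓝[s] x, ⨆ i, ∫⁻ y in U, ‖F i y‖ₑ ∂μ < ∞

lemma LocallyL1BoundedOn.of_forall_ae_norm_le [SeminormedAddCommGroup E] {F : ι → α → E}
    {s : Set α} {μ : Measure α} {g : α → ℝ} (hg : LocallyIntegrableOn g s μ)
    (hFg : ∀ i, ∀ᵐ x ∂μ.restrict s, ‖F i x‖ ≤ g x) : LocallyL1BoundedOn F s μ := by
  intro x hx
  obtain ⟨U, hU, hgU⟩ := hg x hx
  refine ⟨U ∩ s, inter_mem hU self_mem_nhdsWithin, ?_⟩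
  have hgUs : IntegrableOn g (U ∩ s) μ := hgU.mono_set inter_subset_left
  refine (iSup_le fun i => lintegral_mono_ae ?_).trans_lt hgUs.hasFiniteIntegral
  filter_upwards [ae_restrict_of_ae_restrict_of_subset inter_subset_right (hFg i)] with y hy
  exact enorm_le_iff_norm_le.2 (hy.trans (Real.le_norm_self _))

end LocallyL1Bounded

section MeanValueInequality

open Metric Set ENNReal Real

lemma lintegral_eq_lintegral_lintegral_circleMap {f : ℂ → ℝ≥0∞} (hf : Measurable f) (c : ℂ) :
    ∫⁻ z, f z =
      ∫⁻ ρ in Ioi 0, ENNReal.ofReal ρ * ∫⁻ θ in Ioo (-π) π, f (circleMap c ρ θ) := by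
  have hcircle : Measurable fun p : ℝ × ℝ => circleMap c p.1 p.2 :=
    Continuous.measurable (by unfold circleMap; fun_prop)
  have hpolar : ∀ p : ℝ × ℝ, c + Complex.polarCoord.symm p = circleMap c p.1 p.2 := fun p => by
    simp [circleMap, Complex.exp_mul_I]
  calc ∫⁻ z, f z = ∫⁻ z, f (c + z) := (lintegral_add_left_eq_self f c).symm
    _ = ∫⁻ p in Ioi 0 ×ˢ Ioo (-π) π, ENNReal.ofReal p.1 * f (circleMap c p.1 p.2) := by
      simp only [← Complex.lintegral_comp_polarCoord_symm, hpolar, polarCoord_target, smul_eq_mul]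
    _ = ∫⁻ ρ in Ioi 0, ∫⁻ θ in Ioo (-π) π, ENNReal.ofReal ρ * f (circleMap c ρ θ) := by
      rw [Measure.volume_eq_prod, setLIntegral_prod]
      exact (measurable_fst.ennreal_ofReal.mul (hf.comp hcircle)).aemeasurable
    _ = ∫⁻ ρ in Ioi 0, ENNReal.ofReal ρ * ∫⁻ θ in Ioo (-π) π, f (circleMap c ρ θ) := by
      simp only [lintegral_const_mul' _ _ ofReal_ne_top]

lemma circleAverage_eq_setAverage_Ioo {E : Type*} [NormedAddCommGroup E] [NormedSpace ℝ E]
    (F : ℂ → E) (c : ℂ) (R : ℝ) :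
    circleAverage F c R = ⨍ θ in Ioo (-π) π, F (circleMap c R θ) := by
  have hperiodic : Function.Periodic (fun θ => F (circleMap c R θ)) (2 * π) := fun θ => by
    simp only [periodic_circleMap c R θ]
  have hshift := hperiodic.intervalIntegral_add_eq 0 (-π)
  rw [zero_add, show -π + 2 * π = π by ring] at hshift
  rw [circleAverage_def, hshift, intervalIntegral.integral_of_le (by linarith [pi_pos]),
    integral_Ioc_eq_integral_Ioo, setAverage_eq, volume_real_Ioo_of_le (by linarith [pi_pos])]
  ring_nf

variable {X : Type*} [NormedAddCommGroup X] [NormedSpace ℂ X] [CompleteSpace X]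
  {F : ℂ → X} {c : ℂ}

lemma enorm_le_setLAverage_circleMap {R : ℝ} (hF : DiffContOnCl ℂ F (ball c |R|)) :
    ‖F c‖ₑ ≤ ⨍⁻ θ in Ioo (-π) π, ‖F (circleMap c R θ)‖ₑ ∂volume := by
  rw [← hF.circleAverage, circleAverage_eq_setAverage_Ioo]
  exact enorm_integral_le_lintegral_enorm _

lemma enorm_le_setLAverage_ball {r : ℝ} (hr : 0 < r) (hF : DifferentiableOn ℂ F (ball c r)) :
    ‖F c‖ₑ ≤ ⨍⁻ z in ball c r, ‖F z‖ₑ ∂volume := by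
  have hmeas : Measurable ((ball c r).indicator fun z => ‖F z‖ₑ) := by
    classical
    rw [← piecewise_eq_indicator]
    exact hF.continuousOn.enorm.measurable_piecewise continuousOn_const measurableSet_ball
  have hcircle : ∀ ρ ∈ Ioi (0 : ℝ),
      ∫⁻ θ in Ioo (-π) π, (ball c r).indicator (fun _ => ‖F c‖ₑ) (circleMap c ρ θ) ≤
        ∫⁻ θ in Ioo (-π) π, (ball c r).indicator (fun z => ‖F z‖ₑ) (circleMap c ρ θ) := by
    intro ρ (hρ : 0 < ρ)
    have hmem : ∀ θ, circleMap c ρ θ ∈ ball c r ↔ ρ < r := fun θ => by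
      simp [mem_ball, dist_eq_norm, abs_of_pos hρ]
    rcases lt_or_ge ρ r with hρr | hρr
    · have hdiff : DiffContOnCl ℂ F (ball c |ρ|) := by
        rw [abs_of_pos hρ]
        exact hF.diffContOnCl_ball (closedBall_subset_ball hρr)
      simp only [indicator_of_mem ((hmem _).2 hρr)]
      rw [setLIntegral_const, mul_comm, ← measure_mul_setLAverage _ (by simp)]
      gcongr
      exact enorm_le_setLAverage_circleMap hdiff
    · simp [hmem, hρr.not_gt]
  rw [setLAverage_eq, ENNReal.le_div_iff_mul_le (.inl (measure_ball_pos _ _ hr).ne')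
    (.inl measure_ball_lt_top.ne)]
  calc ‖F c‖ₑ * volume (ball c r) = ∫⁻ z, (ball c r).indicator (fun _ => ‖F c‖ₑ) z := by
        rw [lintegral_indicator measurableSet_ball, setLIntegral_const]
    _ ≤ ∫⁻ z, (ball c r).indicator (fun z => ‖F z‖ₑ) z := by
        rw [lintegral_eq_lintegral_lintegral_circleMap
            (measurable_const.indicator measurableSet_ball) c,
          lintegral_eq_lintegral_lintegral_circleMap hmeas c]
        exact setLIntegral_mono' measurableSet_Ioi fun ρ hρ => mul_le_mul' le_rfl (hcircle ρ hρ)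
    _ = ∫⁻ z in ball c r, ‖F z‖ₑ := lintegral_indicator measurableSet_ball _

end MeanValueInequality

section Equicontinuity

open Metric Set Topology ENNReal

variable {ι : Type*}

lemma equicontinuousAt_of_eventually_norm_le {E X : Type*} [NormedAddCommGroup E]
    [NormedSpace ℂ E] [NormedAddCommGroup X] [NormedSpace ℂ X] {F : ι → E → X} {x₀ : E} {M : ℝ}
    (hF : ∀ᶠ x in 𝓝 x₀, ∀ i, DifferentiableAt ℂ (F i) x)
    (hM : ∀ᶠ x in 𝓝 x₀, ∀ i, ‖F i x‖ ≤ M) : EquicontinuousAt F x₀ := by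
  obtain ⟨r, hr, hball⟩ := eventually_nhds_iff_ball.1 (hF.and hM)
  refine equicontinuousAt_of_continuity_modulus (fun x => (M + M) / r * dist x x₀) ?_ F ?_
  · exact Continuous.tendsto' (by fun_prop) _ _ (by simp)
  · filter_upwards [ball_mem_nhds x₀ hr] with x hx i
    rw [dist_comm]
    refine Complex.dist_le_div_mul_dist_of_mapsTo_ball
      (fun y hy => ((hball y hy).1 i).differentiableWithinAt) (fun y hy => ?_) hx
    exact (dist_le_norm_add_norm _ _).trans
      (add_le_add ((hball y hy).2 i) ((hball x₀ (mem_ball_self hr)).2 i))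

lemma tendstoUniformlyOn_of_equicontinuousOn {α β : Type*} [TopologicalSpace α]
    [UniformSpace β] {F : ι → α → β} {f : α → β} {l : Filter ι} {K : Set α} (hK : IsCompact K)
    (hF : EquicontinuousOn F K) (hf : ∀ x ∈ K, Tendsto (F · x) l (𝓝 (f x))) :
    TendstoUniformlyOn F f l K := by
  have h := (EquicontinuousOn.tendsto_uniformOnFun_iff_pi' (𝔖 := {K}) (by simpa) (by simpa) l f).2
    (tendsto_pi_nhds.2 fun x => hf x (by simpa using x.2))
  exact UniformOnFun.tendsto_iff_tendstoUniformlyOn.1 h K rfl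

variable {X : Type*} [NormedAddCommGroup X] [NormedSpace ℂ X] [CompleteSpace X]
  {F : ι → ℂ → X} {Ω : Set ℂ}

lemma LocallyL1BoundedOn.exists_eventually_norm_le (hL : LocallyL1BoundedOn F Ω volume)
    (hΩ : IsOpen Ω) (hF : ∀ i, DifferentiableOn ℂ (F i) Ω)
    {z₀ : ℂ} (hz₀ : z₀ ∈ Ω) : ∃ M : ℝ, ∀ᶠ z in 𝓝 z₀, ∀ i, ‖F i z‖ ≤ M := by
  obtain ⟨U, hU, hUtop⟩ := hL z₀ hz₀
  rw [hΩ.nhdsWithin_eq hz₀] at hU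
  obtain ⟨r, hr, hrU⟩ := Metric.mem_nhds_iff.1 (inter_mem hU (hΩ.mem_nhds hz₀))
  set C := ⨆ i, ∫⁻ w in U, ‖F i w‖ₑ
  have hvol : volume (ball (0 : ℂ) (r / 2)) ≠ 0 := (measure_ball_pos _ _ (half_pos hr)).ne'
  refine ⟨(C / volume (ball (0 : ℂ) (r / 2))).toReal, ?_⟩
  filter_upwards [ball_mem_nhds z₀ (half_pos hr)] with z hz i
  have hsub : ball z (r / 2) ⊆ U ∩ Ω :=
    (ball_subset_ball' (by linarith [mem_ball.1 hz])).trans hrU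
  have hle : ‖F i z‖ₑ ≤ C / volume (ball (0 : ℂ) (r / 2)) := calc
    ‖F i z‖ₑ ≤ ⨍⁻ w in ball z (r / 2), ‖F i w‖ₑ ∂volume :=
      enorm_le_setLAverage_ball (half_pos hr) ((hF i).mono (hsub.trans inter_subset_right))
    _ = (∫⁻ w in ball z (r / 2), ‖F i w‖ₑ) / volume (ball (0 : ℂ) (r / 2)) := by
      rw [setLAverage_eq, Measure.addHaar_ball_center]
    _ ≤ C / volume (ball (0 : ℂ) (r / 2)) := by
      gcongr
      exact (lintegral_mono_set (hsub.trans inter_subset_left)).trans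
        (le_iSup (fun i => ∫⁻ w in U, ‖F i w‖ₑ) i)
  simpa using ENNReal.toReal_mono (ENNReal.div_ne_top hUtop.ne hvol) hle

lemma LocallyL1BoundedOn.equicontinuousOn (hL : LocallyL1BoundedOn F Ω volume) (hΩ : IsOpen Ω)
    (hF : ∀ i, DifferentiableOn ℂ (F i) Ω) : EquicontinuousOn F Ω := by
  intro z₀ hz₀
  obtain ⟨M, hM⟩ := hL.exists_eventually_norm_le hΩ hF hz₀
  refine (equicontinuousAt_of_eventually_norm_le ?_ hM).equicontinuousWithinAt Ω
  filter_upwards [hΩ.mem_nhds hz₀] with z hz i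
  exact (hF i).differentiableAt (hΩ.mem_nhds hz)

end Equicontinuity

theorem pointwise_limit_of_locally_L1_bounded_net_holomorphic_general
    {X : Type*} [NormedAddCommGroup X] [NormedSpace ℂ X] [CompleteSpace X]
    {Ω : Set ℂ} (hΩ : IsOpen Ω) {ι : Type*} {l : Filter ι} [l.NeBot] {F : ι → ℂ → X}
    (hF : ∀ i, DifferentiableOn ℂ (F i) Ω) (hL : LocallyL1BoundedOn F Ω volume)
    {f : ℂ → X} (hf : ∀ z ∈ Ω, Tendsto (F · z) l (nhds (f z))) :
    (∀ z ∈ Ω, DifferentiableAt ℂ f z) ∧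
    ∀ K ⊆ Ω, IsCompact K → TendstoUniformlyOn F f l K := by
  have hunif : ∀ K ⊆ Ω, IsCompact K → TendstoUniformlyOn F f l K := fun K hKΩ hK =>
    tendstoUniformlyOn_of_equicontinuousOn hK ((hL.equicontinuousOn hΩ hF).mono hKΩ)
      fun z hz => hf z (hKΩ hz)
  have hlim : DifferentiableOn ℂ f Ω :=
    ((tendstoLocallyUniformlyOn_iff_forall_isCompact hΩ).2 hunif).differentiableOn
      (.of_forall hF) hΩ
  exact ⟨fun z hz => hlim.differentiableAt (hΩ.mem_nhds hz), hunif⟩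

/-- A locally `L¹`-bounded net of holomorphic functions converging
pointwise on an open set `Ω ⊆ ℂ` converges uniformly on compact subsets of `Ω`, and the
limit is holomorphic. -/
theorem pointwise_limit_of_locally_L1_bounded_net_holomorphic
    {X : Type*} [NormedAddCommGroup X] [NormedSpace ℂ X] [CompleteSpace X]
    {Ω : Set ℂ} (hΩ : IsOpen Ω)
    {I : Type*} [Preorder I] [IsDirected I (· ≤ ·)] [Nonempty I]
    (F : I → ℂ → X) (hol : ∀ i : I, ∀ z ∈ Ω, DifferentiableAt ℂ (F i) z)
    (g : ℂ → ℝ) (hg : LocallyIntegrableOn g Ω)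
    (hbd : ∀ i : I, ∀ᵐ ξ ∂(volume.restrict Ω), ‖F i ξ‖ ≤ g ξ)
    (f : ℂ → X) (hf : ∀ z ∈ Ω, Tendsto (fun i => F i z) atTop (nhds (f z))) :
    (∀ z ∈ Ω, DifferentiableAt ℂ f z) ∧
    ∀ K ⊆ Ω, IsCompact K → TendstoUniformlyOn (fun i z => F i z) f atTop K :=
  pointwise_limit_of_locally_L1_bounded_net_holomorphic_general hΩ
    (fun i z hz => (hol i z hz).differentiableWithinAt) (.of_forall_ae_norm_le hg hbd) hf
end
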